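/- Let N = 2^v r, where v > 0 and r is an odd prime such that 2 is a primitive root modulo r. Let 1 ≤ k ≤ N and let S be an N-periodic binary sequence such that L(S) = N - c > L_{N,k}(S) ≥ N - min(2^v, r - 2) for some nonnegative integer c. Set Z = 2^{⌈log_2(N - L_{N,k}(S))⌉}. Then there exist an integer m ≤ k and an N-periodic binary sequence E of Hamming weight m with support contained in {0, 1, ..., Z - 1} such that L(S + E) = L_{N,k}(S); in particular L_{N,k}(S) = L_{N,k;Z}(S). -/

import Mathlib

/-- Generating polynomial `S^N(x) = s_0 + s_1 x + ... + s_{N-1} x^{N-1}` of one period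
of an `N`-periodic binary sequence. -/
noncomputable def genPoly {N : ℕ} (S : Fin N → ZMod 2) : Polynomial (ZMod 2) :=
  ∑ i : Fin N, Polynomial.C (S i) * Polynomial.X ^ (i : ℕ)

/-- Linear complexity `L(S) = N - deg (gcd (1 - x^N, S^N(x)))`. -/
noncomputable def linComp {N : ℕ} (S : Fin N → ZMod 2) : ℕ :=
  N - (EuclideanDomain.gcd (1 - Polynomial.X ^ N) (genPoly S)).natDegree

/-- Hamming weight of one period of an `N`-periodic binary sequence. -/
def wt {N : ℕ} (T : Fin N → ZMod 2) : ℕ :=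
  (Finset.univ.filter (fun i => T i ≠ 0)).card

/-- `k`-error linear complexity `L_{N,k}(S)`. -/
noncomputable def errLC {N : ℕ} (S : Fin N → ZMod 2) (k : ℕ) : ℕ :=
  sInf {c | ∃ T : Fin N → ZMod 2, wt T ≤ k ∧ linComp (S + T) = c}

/-- `k`-error linear complexity with a zone of length `Z`: `L_{N,k;Z}(S)`. -/
noncomputable def errLCZone {N : ℕ} (S : Fin N → ZMod 2) (k Z : ℕ) : ℕ :=
  sInf {c | ∃ T : Fin N → ZMod 2, wt T ≤ k ∧ (∀ i : Fin N, Z ≤ (i : ℕ) → T i = 0) ∧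
    linComp (S + T) = c}

/-- `E_1(j)`: the sequence whose only nonzero term in one period is a `1` at position `j`. -/
def E1 {N : ℕ} (j : Fin N) : Fin N → ZMod 2 :=
  fun i => if i = j then 1 else 0

open Polynomial in
lemma aux_irr (r : ℕ) (hr : r.Prime) (hodd : Odd r)
    (hprim : orderOf (2 : ZMod r) = r - 1) :
    Irreducible (cyclotomic r (ZMod 2)) := by
  have h2 : ¬ 2 ∣ r := by
    intro h
    exact (Nat.not_even_iff_odd.mpr hodd) (even_iff_two_dvd.mpr h)
  refine ZMod.irreducible_of_dvd_cyclotomic_of_natDegree h2 dvd_rfl ?_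
  rw [natDegree_cyclotomic, Nat.totient_prime hr, ← orderOf_units, ZMod.coe_unitOfCoprime]
  exact_mod_cast hprim.symm

open Polynomial in
/-- A low degree divisor of `1 - X^N` is a power of `X - 1`. -/
lemma aux_div (v r : ℕ) (hr : r.Prime) (hodd : Odd r)
    (hprim : orderOf (2 : ZMod r) = r - 1) (g : (ZMod 2)[X])
    (hg : g ∣ 1 - X ^ (2 ^ v * r)) (hdeg : g.natDegree ≤ r - 2) :
    Associated g ((X - 1) ^ g.natDegree) := by
  have : Fact r.Prime := ⟨hr⟩
  have hirr := aux_irr r hr hodd hprim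
  have hr2 := hr.two_le
  have hfac : (X - 1 : (ZMod 2)[X]) ^ (2 ^ v) * (cyclotomic r (ZMod 2)) ^ (2 ^ v)
      = X ^ (2 ^ v * r) - 1 := by
    rw [← mul_pow, mul_comm (X - 1), cyclotomic_prime_mul_X_sub_one, sub_pow_char_pow, ← pow_mul,
      one_pow, mul_comm r]
  have hne : (1 - X ^ (2 ^ v * r) : (ZMod 2)[X]) ≠ 0 := by
    rw [← neg_ne_zero, neg_sub]
    have hN : 0 < 2 ^ v * r := Nat.mul_pos (by positivity) hr.pos
    have h := X_pow_sub_C_ne_zero hN (1 : ZMod 2)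
    rwa [C_1] at h
  have hg0 : g ≠ 0 := ne_zero_of_dvd_ne_zero hne hg
  have hcop : IsCoprime g ((cyclotomic r (ZMod 2)) ^ (2 ^ v)) := by
    apply IsCoprime.pow_right
    apply IsCoprime.symm
    rw [hirr.coprime_iff_not_dvd]
    intro h
    have := natDegree_le_of_dvd h hg0
    rw [natDegree_cyclotomic, Nat.totient_prime hr] at this
    omega
  have h1 : g ∣ (X - 1 : (ZMod 2)[X]) ^ (2 ^ v) := by
    apply hcop.dvd_of_dvd_mul_right
    rw [hfac, ← neg_sub, dvd_neg]
    exact hg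
  have hp : Prime (X - 1 : (ZMod 2)[X]) := by
    have := prime_X_sub_C (1 : ZMod 2)
    simpa using this
  obtain ⟨i, _, hi⟩ := (dvd_prime_pow hp _).1 h1
  have : g.natDegree = i := by
    rw [natDegree_eq_of_degree_eq (degree_eq_degree_of_associated hi)]
    have h := natDegree_X_sub_C (1 : ZMod 2)
    rw [C_1] at h
    rw [natDegree_pow, h, mul_one]
  rw [this]
  exact hi

/-- Folding `T` modulo `Z`. -/
def foldZ {N : ℕ} (Z : ℕ) (T : Fin N → ZMod 2) : Fin N → ZMod 2 :=
  fun i => ∑ j : Fin N, if (j : ℕ) % Z = (i : ℕ) then T j else 0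

lemma foldZ_exists {N Z : ℕ} (T : Fin N → ZMod 2) (i : Fin N) (h : foldZ Z T i ≠ 0) :
    ∃ j : Fin N, T j ≠ 0 ∧ (j : ℕ) % Z = (i : ℕ) := by
  obtain ⟨j, _, hj⟩ := Finset.exists_ne_zero_of_sum_ne_zero h
  by_cases hji : (j : ℕ) % Z = (i : ℕ)
  · rw [if_pos hji] at hj
    exact ⟨j, hj, hji⟩
  · rw [if_neg hji] at hj
    exact absurd rfl hj

lemma foldZ_wt {N Z : ℕ} (T : Fin N → ZMod 2) : wt (foldZ Z T) ≤ wt T := by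
  classical
  unfold wt
  have : (Finset.univ.filter (fun i => foldZ Z T i ≠ 0)) ⊆
      (Finset.univ.filter (fun i => T i ≠ 0)).image
        (fun j : Fin N => (⟨(j : ℕ) % Z, (Nat.mod_le _ _).trans_lt j.2⟩ : Fin N)) := by
    intro i hi
    obtain ⟨j, hj, hji⟩ := foldZ_exists T i (Finset.mem_filter.1 hi).2
    exact Finset.mem_image.2 ⟨j, by simpa using hj, Fin.ext hji⟩
  exact (Finset.card_le_card this).trans Finset.card_image_le

open Polynomial in
lemma foldZ_gen {N Z : ℕ} (T : Fin N → ZMod 2) :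
    genPoly (foldZ Z T) = ∑ j : Fin N, C (T j) * X ^ ((j : ℕ) % Z) := by
  unfold genPoly foldZ
  simp only [map_sum, Finset.sum_mul]
  rw [Finset.sum_comm]
  refine Finset.sum_congr rfl fun j _ => ?_
  rw [Finset.sum_eq_single (⟨(j : ℕ) % Z, (Nat.mod_le _ _).trans_lt j.2⟩ : Fin N)]
  · simp
  · intro b _ hb
    rw [if_neg, C_0, zero_mul]
    intro h
    exact hb (Fin.ext h.symm)
  · simp

open Polynomial in
lemma foldZ_dvd {N Z : ℕ} (T : Fin N → ZMod 2) :
    (X ^ Z - 1 : (ZMod 2)[X]) ∣ genPoly T - genPoly (foldZ Z T) := by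
  rw [foldZ_gen, genPoly, ← Finset.sum_sub_distrib]
  refine Finset.dvd_sum fun j _ => ?_
  rw [← mul_sub]
  apply Dvd.dvd.mul_left
  have h : (X ^ (j : ℕ) : (ZMod 2)[X]) = X ^ ((j : ℕ) % Z) * (X ^ Z) ^ ((j : ℕ) / Z) := by
    rw [← pow_mul, ← pow_add, Nat.mod_add_div]
  rw [h, ← mul_sub_one]
  exact (sub_one_dvd_pow_sub_one _ _).mul_left _

lemma genPoly_add {N : ℕ} (S T : Fin N → ZMod 2) :
    genPoly (S + T) = genPoly S + genPoly T := by
  simp [genPoly, add_mul, Finset.sum_add_distrib]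

open Polynomial in
lemma aux_main (v r k : ℕ) (hr : r.Prime) (hodd : Odd r)
    (hprim : orderOf (2 : ZMod r) = r - 1)
    (S : Fin (2^v * r) → ZMod 2)
    (hge : 2^v * r - min (2^v) (r - 2) ≤ errLC S k) :
    ∃ E : Fin (2^v * r) → ZMod 2, wt E ≤ k ∧
      (∀ i : Fin (2^v * r), E i ≠ 0 → (i : ℕ) < 2^(Nat.clog 2 (2^v * r - errLC S k))) ∧
      linComp (S + E) = errLC S k := by
  have hN : 0 < 2 ^ v * r := Nat.mul_pos (by positivity) hr.pos
  have hmem : errLC S k ∈ {c | ∃ T : Fin (2^v * r) → ZMod 2, wt T ≤ k ∧ linComp (S + T) = c} :=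
    Nat.sInf_mem ⟨_, 0, by simp [wt], rfl⟩
  obtain ⟨T, hT, hLT⟩ := hmem
  have hne : (1 - X ^ (2 ^ v * r) : (ZMod 2)[X]) ≠ 0 := by
    rw [← neg_ne_zero, neg_sub]
    have h := X_pow_sub_C_ne_zero hN (1 : ZMod 2)
    rwa [C_1] at h
  have hdegN : (1 - X ^ (2 ^ v * r) : (ZMod 2)[X]).natDegree = 2 ^ v * r := by
    rw [← natDegree_neg, neg_sub]
    have := natDegree_X_pow_sub_C (n := 2 ^ v * r) (r := (1 : ZMod 2))
    rwa [C_1] at this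
  set d := 2 ^ v * r - errLC S k with hd
  set Z := 2 ^ (Nat.clog 2 d) with hZ
  have hdZ : d ≤ Z := Nat.le_pow_clog (by norm_num) d
  have hgd : (EuclideanDomain.gcd (1 - X ^ (2 ^ v * r)) (genPoly (S + T))) ∣
      1 - X ^ (2 ^ v * r) := EuclideanDomain.gcd_dvd_left _ _
  have hgT : (EuclideanDomain.gcd (1 - X ^ (2 ^ v * r)) (genPoly (S + T))) ∣
      genPoly (S + T) := EuclideanDomain.gcd_dvd_right _ _
  unfold linComp at hLT
  generalize EuclideanDomain.gcd (1 - X ^ (2 ^ v * r)) (genPoly (S + T)) = g at hLT hgd hgT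
  have hgN : g.natDegree ≤ 2 ^ v * r := hdegN ▸ natDegree_le_of_dvd hgd hne
  have hgdeg : g.natDegree = d := by omega
  have hassoc := aux_div v r hr hodd hprim g hgd (by omega)
  rw [hgdeg] at hassoc
  have hXZ : (X - 1 : (ZMod 2)[X]) ^ d ∣ X ^ Z - 1 := by
    have : (X ^ Z - 1 : (ZMod 2)[X]) = (X - 1) ^ Z := by
      rw [hZ, sub_pow_char_pow, one_pow]
    rw [this]
    exact pow_dvd_pow _ hdZ
  have hwt := (foldZ_wt (Z := Z) T).trans hT
  refine ⟨foldZ Z T, hwt, ?_, ?_⟩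
  · intro i hi
    obtain ⟨j, _, hj⟩ := foldZ_exists T i hi
    rw [← hj]
    exact Nat.mod_lt _ (by positivity)
  · apply le_antisymm
    · have h1 : (X - 1 : (ZMod 2)[X]) ^ d ∣ genPoly (S + foldZ Z T) := by
        have h2 := hXZ.trans (foldZ_dvd (Z := Z) T)
        have h3 := hassoc.symm.dvd.trans hgT
        have h4 := dvd_sub h3 h2
        rw [genPoly_add] at h4 ⊢
        convert h4 using 1
        ring
      have h2 := EuclideanDomain.dvd_gcd (hassoc.symm.dvd.trans hgd) h1
      have hg0 : EuclideanDomain.gcd (1 - X ^ (2 ^ v * r)) (genPoly (S + foldZ Z T)) ≠ 0 :=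
        ne_zero_of_dvd_ne_zero hne (EuclideanDomain.gcd_dvd_left _ _)
      have h3 := natDegree_le_of_dvd h2 hg0
      have h := natDegree_X_sub_C (1 : ZMod 2)
      rw [C_1] at h
      rw [natDegree_pow, h, mul_one] at h3
      unfold linComp
      omega
    · exact Nat.sInf_le ⟨_, hwt, rfl⟩

/-- Theorem on sequences of period `N = 2^v r` with `2` a primitive root mod the odd
prime `r`: an error vector reaching `L_{N,k}(S)` can be found with support in
`[0, Z)` for `Z = 2^{⌈log₂(N - L_{N,k}(S))⌉}`; in particular
`L_{N,k}(S) = L_{N,k;Z}(S)`. -/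
theorem stmt15 (v r k c : ℕ) (hv : 0 < v) (hr : r.Prime) (hodd : Odd r)
    (hprim : orderOf (2 : ZMod r) = r - 1)
    (hk1 : 1 ≤ k) (hk : k ≤ 2^v * r)
    (S : Fin (2^v * r) → ZMod 2)
    (hLS : linComp S = 2^v * r - c)
    (hgt : errLC S k < linComp S)
    (hge : 2^v * r - min (2^v) (r - 2) ≤ errLC S k) :
    (∃ m ≤ k, ∃ E : Fin (2^v * r) → ZMod 2, wt E = m ∧
      (∀ i : Fin (2^v * r), E i ≠ 0 → (i : ℕ) < 2^(Nat.clog 2 (2^v * r - errLC S k))) ∧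
      linComp (S + E) = errLC S k) ∧
    errLC S k = errLCZone S k (2^(Nat.clog 2 (2^v * r - errLC S k))) := by
  obtain ⟨E, hE, hsupp, hL⟩ := aux_main v r k hr hodd hprim S hge
  refine ⟨⟨wt E, hE, E, rfl, hsupp, hL⟩, ?_⟩
  apply le_antisymm
  · have hmem : errLCZone S k (2^(Nat.clog 2 (2^v * r - errLC S k))) ∈
        {c | ∃ T : Fin (2^v * r) → ZMod 2, wt T ≤ k ∧
          (∀ i : Fin (2^v * r), (2^(Nat.clog 2 (2^v * r - errLC S k))) ≤ (i : ℕ) → T i = 0) ∧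
          linComp (S + T) = c} :=
      Nat.sInf_mem ⟨_, 0, by simp [wt], by simp, rfl⟩
    obtain ⟨T, hT, _, hLT⟩ := hmem
    exact Nat.sInf_le ⟨T, hT, hLT⟩
  · refine Nat.sInf_le ⟨E, hE, ?_, hL⟩
    intro i hi
    by_contra h
    exact absurd (hsupp i h) (not_lt.mpr hi)
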